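/- arXiv:0905.1183 — 2 statements merged into one kernel-verified Lean document; each statement's English description precedes it below -/
import Mathlib

section
/- There exists a universal constant c > 0 (depending only on n, s) such that: if E is a variational subsolution in B₁ ⊆ R^n and |E ∩ B₁| ≤ c, then |E ∩ B_{1/2}| = 0. -/
open MeasureTheory Metric Filter Set

/-- Interaction energy `L(A,B) = ∫∫ χ_A(x) χ_B(y) |x-y|^{-(n+s)} dx dy`, valued in `[0,∞]`. -/
noncomputable def interactionL (n : ℕ) (s : ℝ)
    (A B : Set (EuclideanSpace ℝ (Fin n))) : ENNReal :=
  ∫⁻ x in A, ∫⁻ y in B, ENNReal.ofReal (1 / ‖x - y‖ ^ ((n : ℝ) + s))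

/-- `E` is a variational subsolution in `B₁`: `L(A, E \ A) − L(A, C E) ≥ 0`
for every measurable `A ⊆ E ∩ B₁`. -/
def IsSubsolutionIn (n : ℕ) (s : ℝ) (Ω E : Set (EuclideanSpace ℝ (Fin n))) : Prop :=
  ∀ A : Set (EuclideanSpace ℝ (Fin n)), MeasurableSet A → A ⊆ E ∩ Ω →
    interactionL n s A Eᶜ ≤ interactionL n s A (E \ A)


lemma kernel_min_finite (n : ℕ) (hn : 1 ≤ n) (s : ℝ) (hs : s ∈ Set.Ioo (0:ℝ) 1) :
    ∫⁻ z : EuclideanSpace ℝ (Fin n),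
      ENNReal.ofReal (1 / ‖z‖ ^ ((n : ℝ) + s)) * ENNReal.ofReal (min ‖z‖ 1) < ⊤ := by
  have : Nonempty (Fin n) := ⟨⟨0, hn⟩⟩
  have hint : Integrable (fun z : EuclideanSpace ℝ (Fin n) =>
      (fun r : ℝ => 1 / r ^ ((n : ℝ) + s) * min r 1) ‖z‖) := by
    refine (integrable_fun_norm_addHaar (volume : Measure (EuclideanSpace ℝ (Fin n)))
      (f := fun r : ℝ => 1 / r ^ ((n : ℝ) + s) * min r 1)).2 ?_
    rw [finrank_euclideanSpace_fin, ← Ioc_union_Ioi_eq_Ioi (zero_le_one (α := ℝ))]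
    have hpow : ∀ r : ℝ, 0 < r → r ^ (n - 1) = r ^ ((n : ℝ) - 1) := by
      intro r hr
      rw [← Real.rpow_natCast, Nat.cast_sub hn, Nat.cast_one]
    apply IntegrableOn.union
    · have h1 : IntegrableOn (fun r : ℝ => r ^ (-s)) (Ioc 0 1) := by
        rw [← intervalIntegrable_iff_integrableOn_Ioc_of_le zero_le_one]
        exact intervalIntegral.intervalIntegrable_rpow' (by linarith [hs.2])
      refine h1.congr_fun ?_ measurableSet_Ioc
      intro r hr
      simp only [smul_eq_mul]
      rw [hpow r hr.1, min_eq_left hr.2, one_div, ← Real.rpow_neg hr.1.le]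
      nth_rewrite 4 [← Real.rpow_one r]
      rw [← Real.rpow_add hr.1, ← Real.rpow_add hr.1]
      congr 1; ring
    · have h1 : IntegrableOn (fun r : ℝ => r ^ (-1 - s)) (Ioi 1) :=
        integrableOn_Ioi_rpow_of_lt (by linarith [hs.1]) one_pos
      refine h1.congr_fun ?_ measurableSet_Ioi
      intro r hr
      have hr1 : (1 : ℝ) < r := hr
      have hr0 : (0 : ℝ) < r := by linarith
      simp only [smul_eq_mul]
      rw [hpow r hr0, min_eq_right hr1.le, one_div, ← Real.rpow_neg hr0.le, mul_one,
        ← Real.rpow_add hr0]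
      congr 1; ring
  have := hint.lintegral_lt_top
  refine lt_of_le_of_lt (le_of_eq ?_) this
  refine lintegral_congr fun z => ?_
  rw [← ENNReal.ofReal_mul (by positivity)]

lemma kernel_measurable (n : ℕ) (s : ℝ) :
    Measurable (fun z : EuclideanSpace ℝ (Fin n) =>
      ENNReal.ofReal (1 / ‖z‖ ^ ((n : ℝ) + s))) := by
  fun_prop

lemma upper_bound (n : ℕ) (s : ℝ) (E : Set (EuclideanSpace ℝ (Fin n))) (hE : MeasurableSet E)
    (r t : ℝ) (hrt : t - r ≤ 1) :
    ∫⁻ ρ in Ioo r t, interactionL n s (E ∩ ball 0 ρ) (ball 0 ρ)ᶜ ≤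
      (∫⁻ z : EuclideanSpace ℝ (Fin n),
        ENNReal.ofReal (1 / ‖z‖ ^ ((n : ℝ) + s)) * ENNReal.ofReal (min ‖z‖ 1)) *
      volume (E ∩ ball 0 t) := by
  set k : EuclideanSpace ℝ (Fin n) → ENNReal :=
    fun z => ENNReal.ofReal (1 / ‖z‖ ^ ((n : ℝ) + s)) with hk
  have hkm : Measurable k := kernel_measurable n s
  let T : Set (ℝ × EuclideanSpace ℝ (Fin n) × EuclideanSpace ℝ (Fin n)) :=
    {p | ‖p.2.1‖ < p.1 ∧ p.1 ≤ ‖p.2.2‖}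
  have hT : MeasurableSet T := by
    apply MeasurableSet.inter
    · exact measurableSet_lt (f := fun p : ℝ × EuclideanSpace ℝ (Fin n) ×
        EuclideanSpace ℝ (Fin n) => ‖p.2.1‖) (g := fun p => p.1) (by fun_prop) (by fun_prop)
    · exact measurableSet_le (f := fun p : ℝ × EuclideanSpace ℝ (Fin n) ×
        EuclideanSpace ℝ (Fin n) => p.1) (g := fun p => ‖p.2.2‖) (by fun_prop) (by fun_prop)
  let g : ℝ × EuclideanSpace ℝ (Fin n) × EuclideanSpace ℝ (Fin n) → ENNReal :=
    T.indicator (fun p => k (p.2.1 - p.2.2))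
  have hg : Measurable g := by
    apply Measurable.indicator _ hT
    exact hkm.comp (by fun_prop)
  have step1 : ∀ ρ ∈ Ioo r t, interactionL n s (E ∩ ball 0 ρ) (ball 0 ρ)ᶜ ≤
      ∫⁻ x in E ∩ ball 0 t, ∫⁻ y, g (ρ, x, y) := by
    intro ρ hρ
    have hsub : E ∩ ball (0 : EuclideanSpace ℝ (Fin n)) ρ ⊆ E ∩ ball 0 t :=
      inter_subset_inter_right _ (ball_subset_ball hρ.2.le)
    unfold interactionL
    calc _ ≤ ∫⁻ x in E ∩ ball 0 ρ, ∫⁻ y, g (ρ, x, y) := by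
          apply setLIntegral_mono' (hE.inter measurableSet_ball)
          intro x hx
          rw [← lintegral_indicator measurableSet_ball.compl]
          apply lintegral_mono
          intro y
          by_cases hy : y ∈ (ball (0 : EuclideanSpace ℝ (Fin n)) ρ)ᶜ
          · have hm : (ρ, x, y) ∈ T := by
              refine ⟨by simpa using hx.2, by simpa using hy⟩
            simp only [g]
            rw [indicator_of_mem hm, indicator_of_mem hy]
          · rw [indicator_of_notMem hy]; exact zero_le
      _ ≤ _ := lintegral_mono_set hsub
  have step2 : ∀ x, ∫⁻ ρ in Ioo r t, ∫⁻ y, g (ρ, x, y) ≤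
      ∫⁻ z, k z * ENNReal.ofReal (min ‖z‖ 1) := by
    intro x
    rw [lintegral_lintegral_swap (by
      apply Measurable.aemeasurable
      exact hg.comp (f := fun p : ℝ × EuclideanSpace ℝ (Fin n) => (p.1, x, p.2)) (by fun_prop))]
    rw [← lintegral_sub_left_eq_self (fun z => k z * ENNReal.ofReal (min ‖z‖ 1)) x]
    apply lintegral_mono
    intro y
    have hle : ∀ ρ ∈ Ioo r t, g (ρ, x, y) ≤ (Ioc ‖x‖ ‖y‖).indicator (fun _ => k (x - y)) ρ := by
      intro ρ _
      by_cases hm : (ρ, x, y) ∈ T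
      · have : ρ ∈ Ioc ‖x‖ ‖y‖ := hm
        simp only [g]
        rw [indicator_of_mem hm, indicator_of_mem this]
      · simp only [g]
        rw [indicator_of_notMem hm]; exact zero_le
    calc ∫⁻ ρ in Ioo r t, g (ρ, x, y)
        ≤ ∫⁻ ρ in Ioo r t, (Ioc ‖x‖ ‖y‖).indicator (fun _ => k (x - y)) ρ :=
          setLIntegral_mono' measurableSet_Ioo hle
      _ = k (x - y) * volume (Ioc ‖x‖ ‖y‖ ∩ Ioo r t) := by
          rw [lintegral_indicator_const measurableSet_Ioc, Measure.restrict_apply measurableSet_Ioc]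
      _ ≤ k (x - y) * ENNReal.ofReal (min ‖x - y‖ 1) := by
          gcongr
          rw [ENNReal.ofReal_min]
          apply le_min
          · refine (measure_mono inter_subset_left).trans ?_
            rw [Real.volume_Ioc]
            apply ENNReal.ofReal_le_ofReal
            rw [norm_sub_rev]
            exact norm_sub_norm_le y x
          · refine (measure_mono inter_subset_right).trans ?_
            rw [Real.volume_Ioo]
            exact ENNReal.ofReal_le_ofReal hrt
  calc _ ≤ ∫⁻ ρ in Ioo r t, ∫⁻ x in E ∩ ball 0 t, ∫⁻ y, g (ρ, x, y) :=
        setLIntegral_mono' measurableSet_Ioo step1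
    _ = ∫⁻ x in E ∩ ball 0 t, ∫⁻ ρ in Ioo r t, ∫⁻ y, g (ρ, x, y) := by
        apply lintegral_lintegral_swap
        apply Measurable.aemeasurable
        have : Measurable (fun q : (ℝ × EuclideanSpace ℝ (Fin n)) × EuclideanSpace ℝ (Fin n) =>
          g (q.1.1, q.1.2, q.2)) := hg.comp (by fun_prop)
        exact this.lintegral_prod_right'
    _ ≤ ∫⁻ x in E ∩ ball 0 t, ∫⁻ z, k z * ENNReal.ofReal (min ‖z‖ 1) :=
        lintegral_mono fun x => step2 x
    _ = _ := by rw [setLIntegral_const]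

lemma lower_bound (n : ℕ) (s : ℝ) (hs : 0 < s) (A A' : Set (EuclideanSpace ℝ (Fin n)))
    (hA : MeasurableSet A) (hA' : MeasurableSet A') (hsub : A' ⊆ A) (β R : ℝ) (hβ : 0 < β)
    (hR : 0 < R)
    (hball : volume (ball (0 : EuclideanSpace ℝ (Fin n)) 1) = ENNReal.ofReal (2 * β))
    (hv : volume A ≤ ENNReal.ofReal (β * R ^ n)) :
    volume A' * ENNReal.ofReal (1 / R ^ ((n : ℝ) + s) * (β * R ^ n)) ≤ interactionL n s A Aᶜ := by
  have key : ∀ x ∈ A, ENNReal.ofReal (1 / R ^ ((n : ℝ) + s) * (β * R ^ n)) ≤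
      ∫⁻ y in Aᶜ, ENNReal.ofReal (1 / ‖x - y‖ ^ ((n : ℝ) + s)) := by
    intro x hx
    have hb : volume (ball x R) = ENNReal.ofReal (2 * β * R ^ n) := by
      rw [Measure.addHaar_ball_of_pos _ _ hR, hball, finrank_euclideanSpace_fin,
        ← ENNReal.ofReal_mul (by positivity)]
      congr 1; ring
    have hvol : ENNReal.ofReal (β * R ^ n) ≤ volume (ball x R \ A) := by
      refine le_trans ?_ le_measure_sdiff
      rw [hb]
      refine le_trans ?_ (tsub_le_tsub_left hv _)
      rw [← ENNReal.ofReal_sub _ (by positivity)]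
      apply ENNReal.ofReal_le_ofReal
      linarith
    calc _ = ENNReal.ofReal (1 / R ^ ((n : ℝ) + s)) * ENNReal.ofReal (β * R ^ n) :=
          ENNReal.ofReal_mul (by positivity)
      _ ≤ ENNReal.ofReal (1 / R ^ ((n : ℝ) + s)) * volume (ball x R \ A) := by gcongr
      _ = ∫⁻ y in ball x R \ A, ENNReal.ofReal (1 / R ^ ((n : ℝ) + s)) := by
          rw [setLIntegral_const]
      _ ≤ ∫⁻ y in ball x R \ A, ENNReal.ofReal (1 / ‖x - y‖ ^ ((n : ℝ) + s)) := by
          apply setLIntegral_mono' (measurableSet_ball.diff hA)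
          intro y hy
          apply ENNReal.ofReal_le_ofReal
          have hne : x ≠ y := fun h => hy.2 (h ▸ hx)
          have hpos : 0 < ‖x - y‖ := norm_pos_iff.2 (sub_ne_zero.2 hne)
          have hle : ‖x - y‖ ≤ R := by
            have := hy.1
            rw [mem_ball, dist_eq_norm, norm_sub_rev] at this
            exact this.le
          gcongr
      _ ≤ _ := lintegral_mono_set (fun y hy => hy.2)
  calc _ = ∫⁻ x in A', ENNReal.ofReal (1 / R ^ ((n : ℝ) + s) * (β * R ^ n)) := by
        rw [setLIntegral_const, mul_comm]
    _ ≤ ∫⁻ x in A', ∫⁻ y in Aᶜ, ENNReal.ofReal (1 / ‖x - y‖ ^ ((n : ℝ) + s)) :=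
        setLIntegral_mono' hA' fun x hx => key x (hsub hx)
    _ ≤ _ := lintegral_mono_set hsub

lemma interaction_split (n : ℕ) (s : ℝ) (E : Set (EuclideanSpace ℝ (Fin n)))
    (hE : MeasurableSet E) (hsub : IsSubsolutionIn n s (ball 0 1) E) (ρ : ℝ) (hρ : ρ ≤ 1) :
    interactionL n s (E ∩ ball 0 ρ) (E ∩ ball 0 ρ)ᶜ ≤
      2 * interactionL n s (E ∩ ball 0 ρ) (ball 0 ρ)ᶜ := by
  set A := E ∩ ball (0 : EuclideanSpace ℝ (Fin n)) ρ with hAdef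
  have hA : MeasurableSet A := hE.inter measurableSet_ball
  have h1 : interactionL n s A Eᶜ ≤ interactionL n s A (E \ A) :=
    hsub A hA (inter_subset_inter_right _ (ball_subset_ball hρ))
  have h2 : interactionL n s A (E \ A) ≤ interactionL n s A (ball 0 ρ)ᶜ := by
    apply lintegral_mono
    intro x
    apply lintegral_mono_set
    intro y hy hyb
    exact hy.2 ⟨hy.1, hyb⟩
  have h3 : interactionL n s A Aᶜ ≤ interactionL n s A Eᶜ + interactionL n s A (E \ A) := by
    unfold interactionL
    have hm : Measurable (fun x : EuclideanSpace ℝ (Fin n) =>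
        ∫⁻ y in Eᶜ, ENNReal.ofReal (1 / ‖x - y‖ ^ ((n : ℝ) + s))) := by
      have : Measurable (fun q : EuclideanSpace ℝ (Fin n) × EuclideanSpace ℝ (Fin n) =>
        ENNReal.ofReal (1 / ‖q.1 - q.2‖ ^ ((n : ℝ) + s))) :=
        (kernel_measurable n s).comp (f := fun q : EuclideanSpace ℝ (Fin n) ×
          EuclideanSpace ℝ (Fin n) => q.1 - q.2) (by fun_prop)
      exact this.lintegral_prod_right'
    rw [← lintegral_add_left hm]
    apply lintegral_mono
    intro x
    refine le_trans (lintegral_mono_set (t := Eᶜ ∪ (E \ A)) ?_) (lintegral_union_le _ _ _)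
    intro y hy
    by_cases hyE : y ∈ E
    · exact Or.inr ⟨hyE, hy⟩
    · exact Or.inl hyE
  calc _ ≤ _ := h3
    _ ≤ interactionL n s A (ball 0 ρ)ᶜ + interactionL n s A (ball 0 ρ)ᶜ :=
      add_le_add (h1.trans h2) h2
    _ = _ := (two_mul _).symm

/-- One step of the De Giorgi iteration, in `[0,∞]`. -/
lemma one_step (n : ℕ) (s : ℝ) (hs : 0 < s) (E : Set (EuclideanSpace ℝ (Fin n)))
    (hE : MeasurableSet E) (hsub : IsSubsolutionIn n s (ball 0 1) E) (r t : ℝ)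
    (ht : t ≤ 1) (hrt1 : t - r ≤ 1) (β R : ℝ) (hβ : 0 < β) (hR : 0 < R)
    (hball : volume (ball (0 : EuclideanSpace ℝ (Fin n)) 1) = ENNReal.ofReal (2 * β))
    (hv : volume (E ∩ ball 0 t) ≤ ENNReal.ofReal (β * R ^ n)) :
    (volume (E ∩ ball 0 r) * ENNReal.ofReal (1 / R ^ ((n : ℝ) + s) * (β * R ^ n))) *
      ENNReal.ofReal (t - r) ≤ 2 * ((∫⁻ z : EuclideanSpace ℝ (Fin n),
        ENNReal.ofReal (1 / ‖z‖ ^ ((n : ℝ) + s)) * ENNReal.ofReal (min ‖z‖ 1)) *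
      volume (E ∩ ball 0 t)) := by
  calc _ = ∫⁻ ρ in Ioo r t,
        volume (E ∩ ball 0 r) * ENNReal.ofReal (1 / R ^ ((n : ℝ) + s) * (β * R ^ n)) := by
        rw [setLIntegral_const, Real.volume_Ioo]
    _ ≤ ∫⁻ ρ in Ioo r t, 2 * interactionL n s (E ∩ ball 0 ρ) (ball 0 ρ)ᶜ := by
        apply setLIntegral_mono' measurableSet_Ioo
        intro ρ hρ
        refine le_trans ?_ (interaction_split n s E hE hsub ρ (hρ.2.le.trans ht))
        apply lower_bound n s hs _ _ (hE.inter measurableSet_ball) (hE.inter measurableSet_ball)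
          (inter_subset_inter_right _ (ball_subset_ball hρ.1.le)) β R hβ hR hball
        exact le_trans (measure_mono
          (inter_subset_inter_right _ (ball_subset_ball hρ.2.le))) hv
    _ = 2 * ∫⁻ ρ in Ioo r t, interactionL n s (E ∩ ball 0 ρ) (ball 0 ρ)ᶜ :=
        lintegral_const_mul' _ _ (by simp)
    _ ≤ _ := by
        gcongr
        exact upper_bound n s E hE r t hrt1

lemma real_step (n : ℕ) (s κ β m q R v v' : ℝ) (hκ : 0 < κ) (hβ : 0 < β) (hm : 0 < m)
    (hq : 0 < q) (hR : 0 < R) (hRs : R ^ s = β * m / (8 * κ) * q)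
    (h : v' * (1 / R ^ ((n : ℝ) + s) * (β * R ^ n)) * (q / 4) ≤ 2 * (κ * v)) :
    v' ≤ m * v := by
  have h1 : v' * (1 / R ^ ((n : ℝ) + s) * (β * R ^ n)) * (q / 4) = v' * (2 * κ / m) := by
    rw [Real.rpow_add hR, hRs, Real.rpow_natCast]
    field_simp
    ring
  rw [h1] at h
  have h2 : v' * (2 * κ / m) * (m / (2 * κ)) ≤ 2 * (κ * v) * (m / (2 * κ)) :=
    mul_le_mul_of_nonneg_right h (by positivity)
  have h3 : v' * (2 * κ / m) * (m / (2 * κ)) = v' := by field_simp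
  have h4 : 2 * (κ * v) * (m / (2 * κ)) = m * v := by field_simp
  linarith

/-- There is a universal `c > 0` such that any variational subsolution in `B₁` with
`|E ∩ B₁| ≤ c` has `|E ∩ B_{1/2}| = 0`. -/
theorem subsolution_clearing (n : ℕ) (hn : 1 ≤ n) (s : ℝ) (hs : s ∈ Set.Ioo (0:ℝ) 1) :
    ∃ c : ℝ, 0 < c ∧ ∀ E : Set (EuclideanSpace ℝ (Fin n)), MeasurableSet E →
      IsSubsolutionIn n s (ball (0 : EuclideanSpace ℝ (Fin n)) 1) E →
      volume (E ∩ ball (0 : EuclideanSpace ℝ (Fin n)) 1) ≤ ENNReal.ofReal c →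
      volume (E ∩ ball (0 : EuclideanSpace ℝ (Fin n)) (1/2)) = 0 := by
  have hs0 : 0 < s := hs.1
  have hKfin := kernel_min_finite n hn s hs
  set K : ENNReal := ∫⁻ z : EuclideanSpace ℝ (Fin n),
      ENNReal.ofReal (1 / ‖z‖ ^ ((n : ℝ) + s)) * ENNReal.ofReal (min ‖z‖ 1) with hK
  obtain ⟨κ, hκ, hKκ⟩ : ∃ κ : ℝ, 0 < κ ∧ K ≤ ENNReal.ofReal κ := by
    refine ⟨K.toReal + 1, by positivity, ?_⟩
    rw [← ENNReal.ofReal_toReal hKfin.ne]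
    apply ENNReal.ofReal_le_ofReal
    rw [ENNReal.toReal_ofReal (by positivity)]
    linarith
  obtain ⟨β, hβ, hball⟩ : ∃ β : ℝ, 0 < β ∧
      volume (ball (0 : EuclideanSpace ℝ (Fin n)) 1) = ENNReal.ofReal (2 * β) := by
    have hpos : 0 < (volume (ball (0 : EuclideanSpace ℝ (Fin n)) 1)).toReal :=
      ENNReal.toReal_pos (measure_ball_pos _ _ one_pos).ne' measure_ball_lt_top.ne
    refine ⟨(volume (ball (0 : EuclideanSpace ℝ (Fin n)) 1)).toReal / 2, by positivity, ?_⟩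
    rw [mul_div_cancel₀ _ (two_ne_zero), ENNReal.ofReal_toReal measure_ball_lt_top.ne]
  obtain ⟨μ, hμ, hμ1, hμs⟩ : ∃ μ : ℝ, 0 < μ ∧ μ < 1 ∧ μ ^ s = 1 / 2 := by
    refine ⟨(1 / 2 : ℝ) ^ (1 / s), by positivity, ?_, ?_⟩
    · exact Real.rpow_lt_one (by norm_num) (by norm_num) (by positivity)
    · rw [← Real.rpow_mul (by norm_num), one_div_mul_cancel hs0.ne', Real.rpow_one]
  obtain ⟨R0, hR0, hR0s⟩ : ∃ R0 : ℝ, 0 < R0 ∧ R0 ^ s = β * μ ^ n / (8 * κ) := by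
    refine ⟨(β * μ ^ n / (8 * κ)) ^ (1 / s), by positivity, ?_⟩
    rw [← Real.rpow_mul (by positivity), one_div_mul_cancel hs0.ne', Real.rpow_one]
  refine ⟨β * R0 ^ n, by positivity, ?_⟩
  intro E hE hsub hvol
  have iter : ∀ k : ℕ, volume (E ∩ ball (0 : EuclideanSpace ℝ (Fin n)) (1/2 + (1/2) ^ (k + 1))) ≤
      ENNReal.ofReal (β * (R0 * μ ^ k) ^ n) := by
    intro k
    induction k with
    | zero =>
      norm_num
      exact hvol
    | succ k ih =>
      have hq : (0 : ℝ) < (1 / 2) ^ k := by positivity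
      have hq1 : ((1 : ℝ) / 2) ^ k ≤ 1 := pow_le_one₀ (by norm_num) (by norm_num)
      have hR : 0 < R0 * μ ^ k := by positivity
      have h := one_step n s hs0 E hE hsub (1/2 + (1/2) ^ (k + 1 + 1)) (1/2 + (1/2) ^ (k + 1))
        (by rw [pow_succ]; linarith) (by rw [pow_succ _ (k + 1), pow_succ _ k]; linarith)
        β (R0 * μ ^ k) hβ hR hball ih
      rw [← hK] at h
      have hd : (1 / 2 + (1 / 2 : ℝ) ^ (k + 1)) - (1 / 2 + (1 / 2) ^ (k + 1 + 1)) =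
          (1 / 2) ^ k / 4 := by ring
      rw [hd] at h
      have hfin : volume (E ∩ ball (0 : EuclideanSpace ℝ (Fin n)) (1/2 + (1/2) ^ (k + 1 + 1)))
          ≠ ⊤ := ((measure_mono inter_subset_right).trans_lt measure_ball_lt_top).ne
      obtain ⟨v', hv', hv'eq⟩ : ∃ v' : ℝ, 0 ≤ v' ∧
          volume (E ∩ ball (0 : EuclideanSpace ℝ (Fin n)) (1/2 + (1/2) ^ (k + 1 + 1))) =
            ENNReal.ofReal v' := ⟨_, ENNReal.toReal_nonneg, (ENNReal.ofReal_toReal hfin).symm⟩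
      rw [hv'eq] at h ⊢
      have h' : ENNReal.ofReal (v' * (1 / (R0 * μ ^ k) ^ ((n : ℝ) + s) * (β * (R0 * μ ^ k) ^ n)) *
          ((1 / 2) ^ k / 4)) ≤ ENNReal.ofReal (2 * (κ * (β * (R0 * μ ^ k) ^ n))) := by
        rw [ENNReal.ofReal_mul (by positivity), ENNReal.ofReal_mul hv',
          ENNReal.ofReal_mul (p := 2) (by norm_num), ENNReal.ofReal_mul (p := κ) hκ.le,
          ENNReal.ofReal_ofNat]
        refine h.trans ?_
        gcongr
      rw [ENNReal.ofReal_le_ofReal_iff (by positivity)] at h'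
      apply ENNReal.ofReal_le_ofReal
      have hRs : (R0 * μ ^ k) ^ s = β * μ ^ n / (8 * κ) * (1 / 2) ^ k := by
        rw [Real.mul_rpow hR0.le (by positivity), hR0s, ← Real.rpow_natCast μ k, ← Real.rpow_mul hμ.le,
          mul_comm (k : ℝ) s, Real.rpow_mul hμ.le, hμs, Real.rpow_natCast]
      have := real_step n s κ β (μ ^ n) ((1 / 2) ^ k) (R0 * μ ^ k) _ v' hκ hβ (by positivity) hq hR
        hRs h'
      refine this.trans (le_of_eq ?_)
      rw [pow_succ, ← mul_assoc R0, mul_pow _ μ]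
      ring
  have hle : ∀ k : ℕ, volume (E ∩ ball (0 : EuclideanSpace ℝ (Fin n)) (1/2)) ≤
      ENNReal.ofReal (β * (R0 * μ ^ k) ^ n) := by
    intro k
    refine (measure_mono (inter_subset_inter_right _ (ball_subset_ball ?_))).trans (iter k)
    have : (0 : ℝ) < (1 / 2) ^ (k + 1) := by positivity
    linarith
  have hlim : Tendsto (fun k : ℕ => ENNReal.ofReal (β * (R0 * μ ^ k) ^ n)) atTop
      (nhds (ENNReal.ofReal (β * (R0 * 0) ^ n))) := by
    apply ENNReal.tendsto_ofReal
    exact (((tendsto_pow_atTop_nhds_zero_of_lt_one hμ.le hμ1).const_mul R0).pow n).const_mul β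
  have h0 := ge_of_tendsto' hlim hle
  rw [mul_zero, zero_pow (by omega), mul_zero, ENNReal.ofReal_zero] at h0
  exact le_antisymm h0 zero_le
end

section
/- Suppose E_k are minimizers for J_{B₁} and χ_{E_k} → χ_E in L^1_loc(R^n). Then E is a minimizer for J_{B₁} and J_{B₁}(E_k) → J_{B₁}(E). -/
open MeasureTheory Metric Filter Set

/-- `J_Ω(E) = L(E ∩ Ω, C E) + L(E \ Ω, C E ∩ Ω)`. -/
noncomputable def Jfun (n : ℕ) (s : ℝ) (Ω E : Set (EuclideanSpace ℝ (Fin n))) : ENNReal :=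
  interactionL n s (E ∩ Ω) Eᶜ + interactionL n s (E \ Ω) (Eᶜ ∩ Ω)

/-- `E` is a minimizer of `J` in the unit ball. -/
def IsMinimizerB1 (n : ℕ) (s : ℝ) (E : Set (EuclideanSpace ℝ (Fin n))) : Prop :=
  MeasurableSet E ∧ ∀ F : Set (EuclideanSpace ℝ (Fin n)), MeasurableSet F →
    F \ ball (0 : EuclideanSpace ℝ (Fin n)) 1 = E \ ball (0 : EuclideanSpace ℝ (Fin n)) 1 →
    Jfun n s (ball (0 : EuclideanSpace ℝ (Fin n)) 1) E ≤
      Jfun n s (ball (0 : EuclideanSpace ℝ (Fin n)) 1) F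

/-- `χ_{A_k} → χ_A` in `L¹_loc`. -/
def L1locIndicatorTendsto (n : ℕ) (A : ℕ → Set (EuclideanSpace ℝ (Fin n)))
    (Alim : Set (EuclideanSpace ℝ (Fin n))) : Prop :=
  ∀ K : Set (EuclideanSpace ℝ (Fin n)), IsCompact K →
    Tendsto (fun k => ∫ x in K,
      |Set.indicator (A k) (fun _ => (1:ℝ)) x - Set.indicator Alim (fun _ => (1:ℝ)) x|)
      atTop (nhds 0)


/-- The kernel on the product space. -/
noncomputable def kerK (n : ℕ) (s : ℝ)
    (p : EuclideanSpace ℝ (Fin n) × EuclideanSpace ℝ (Fin n)) : ENNReal :=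
  ENNReal.ofReal (1 / ‖p.1 - p.2‖ ^ ((n : ℝ) + s))

/-- The interaction measure on the product space. -/
noncomputable def nuM (n : ℕ) (s : ℝ) :
    Measure (EuclideanSpace ℝ (Fin n) × EuclideanSpace ℝ (Fin n)) :=
  ((volume : Measure (EuclideanSpace ℝ (Fin n))).prod volume).withDensity (kerK n s)

lemma measurable_kerK (n : ℕ) (s : ℝ) : Measurable (kerK n s) := by
  unfold kerK
  fun_prop

lemma interactionL_eq (n : ℕ) (s : ℝ) (A B : Set (EuclideanSpace ℝ (Fin n)))
    (hA : MeasurableSet A) (hB : MeasurableSet B) :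
    interactionL n s A B = nuM n s (A ×ˢ B) := by
  rw [nuM, withDensity_apply _ (hA.prod hB), ← Measure.prod_restrict,
    lintegral_prod _ (measurable_kerK n s).aemeasurable]
  rfl

/-- The set of interacting pairs. -/
def SS (n : ℕ) (E : Set (EuclideanSpace ℝ (Fin n))) :
    Set (EuclideanSpace ℝ (Fin n) × EuclideanSpace ℝ (Fin n)) :=
  ((E ∩ ball 0 1) ×ˢ Eᶜ) ∪ ((E \ ball 0 1) ×ˢ (Eᶜ ∩ ball 0 1))

lemma measurable_SS (n : ℕ) (E : Set (EuclideanSpace ℝ (Fin n))) (hE : MeasurableSet E) :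
    MeasurableSet (SS n E) :=
  ((hE.inter measurableSet_ball).prod hE.compl).union
    ((hE.diff measurableSet_ball).prod (hE.compl.inter measurableSet_ball))

lemma Jfun_eq (n : ℕ) (s : ℝ) (E : Set (EuclideanSpace ℝ (Fin n))) (hE : MeasurableSet E) :
    Jfun n s (ball 0 1) E = nuM n s (SS n E) := by
  rw [Jfun, SS, measure_union _
      ((hE.diff measurableSet_ball).prod (hE.compl.inter measurableSet_ball)),
    interactionL_eq _ _ _ _ (hE.inter measurableSet_ball) hE.compl,
    interactionL_eq _ _ _ _ (hE.diff measurableSet_ball) (hE.compl.inter measurableSet_ball)]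
  rw [Set.disjoint_left]
  rintro ⟨x, y⟩ h1 h2
  exact h2.1.2 h1.1.2

lemma inner_scale (n : ℕ) (s : ℝ) (hs : 0 < s) (d : ℝ) (hd : 0 < d)
    (x : EuclideanSpace ℝ (Fin n)) :
    ∫⁻ y : EuclideanSpace ℝ (Fin n), ENNReal.ofReal ((d + ‖x - y‖) ^ (-((n : ℝ) + s))) =
      ENNReal.ofReal (d ^ (-s)) *
        ∫⁻ y : EuclideanSpace ℝ (Fin n), ENNReal.ofReal ((1 + ‖y‖) ^ (-((n : ℝ) + s))) := by
  have hint : Integrable (fun y : EuclideanSpace ℝ (Fin n) => (1 + ‖y‖) ^ (-((n : ℝ) + s))) :=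
    integrable_one_add_norm (by simp [hs])
  rw [lintegral_sub_left_eq_self
    (fun z : EuclideanSpace ℝ (Fin n) => ENNReal.ofReal ((d + ‖z‖) ^ (-((n : ℝ) + s)))) x]
  have h1 : ∀ z : EuclideanSpace ℝ (Fin n), (d + ‖z‖) ^ (-((n : ℝ) + s)) =
      d ^ (-((n : ℝ) + s)) * (1 + ‖d⁻¹ • z‖) ^ (-((n : ℝ) + s)) := by
    intro z
    rw [← Real.mul_rpow hd.le (by positivity), norm_smul, Real.norm_eq_abs,
      abs_of_pos (inv_pos.2 hd), mul_add, mul_inv_cancel_left₀ hd.ne', mul_one]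
  simp_rw [h1]
  have hint2 := hint.comp_smul (inv_ne_zero hd.ne')
  rw [← ofReal_integral_eq_lintegral_ofReal hint
      (Eventually.of_forall fun _ => by positivity),
    ← ofReal_integral_eq_lintegral_ofReal (hint2.const_mul _)
      (Eventually.of_forall fun _ => by positivity),
    ← ENNReal.ofReal_mul (by positivity), integral_const_mul,
    Measure.integral_comp_inv_smul_of_nonneg volume
      (fun y : EuclideanSpace ℝ (Fin n) => (1 + ‖y‖) ^ (-((n : ℝ) + s))) hd.le]
  congr 1
  rw [smul_eq_mul, ← mul_assoc, finrank_euclideanSpace_fin, ← Real.rpow_natCast,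
    ← Real.rpow_add hd]
  congr 2
  ring

lemma ball_int (n : ℕ) (hn : 1 ≤ n) (s : ℝ) (hs : s ∈ Set.Ioo (0:ℝ) 1) :
    ∫⁻ x in ball (0 : EuclideanSpace ℝ (Fin n)) 1, ENNReal.ofReal ((1 - ‖x‖) ^ (-s)) < ⊤ := by
  have : Nonempty (Fin n) := ⟨⟨0, hn⟩⟩
  have h : IntegrableOn (fun x : EuclideanSpace ℝ (Fin n) => (fun r : ℝ => (1 - r) ^ (-s)) ‖x‖)
      (ball 0 1) := by
    refine (integrableOn_fun_norm_addHaar volume (f := fun r : ℝ => (1 - r) ^ (-s))).2 ?_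
    have h0 : IntervalIntegrable (fun x : ℝ => x ^ (-s)) volume 0 1 :=
      intervalIntegral.intervalIntegrable_rpow' (by linarith [hs.2])
    have h1 := (h0.comp_sub_left 1).symm
    simp only [sub_zero, sub_self] at h1
    rw [intervalIntegrable_iff_integrableOn_Ioo_of_le zero_le_one] at h1
    refine Integrable.mono' h1 ?_ ?_
    · apply Measurable.aestronglyMeasurable
      fun_prop
    · filter_upwards [ae_restrict_mem measurableSet_Ioo] with r hr
      have hp : 0 ≤ (1 - r) ^ (-s) := Real.rpow_nonneg (by linarith [hr.2]) _
      rw [smul_eq_mul, norm_mul, Real.norm_of_nonneg hp, Real.norm_of_nonneg (pow_nonneg hr.1.le _)]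
      exact mul_le_of_le_one_left hp (pow_le_one₀ hr.1.le hr.2.le)
  exact h.lintegral_lt_top

lemma L_finite (n : ℕ) (hn : 1 ≤ n) (s : ℝ) (hs : s ∈ Set.Ioo (0:ℝ) 1) :
    interactionL n s (ball 0 1) (ball 0 1)ᶜ < ⊤ := by
  set C : ENNReal := ENNReal.ofReal (2 ^ ((n : ℝ) + s)) *
    ∫⁻ y : EuclideanSpace ℝ (Fin n), ENNReal.ofReal ((1 + ‖y‖) ^ (-((n : ℝ) + s))) with hC
  have hCfin : C ≠ ⊤ := by
    apply ENNReal.mul_ne_top ENNReal.ofReal_ne_top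
    exact (finite_integral_one_add_norm (by simp [hs.1])).ne
  have hle : interactionL n s (ball 0 1) (ball 0 1)ᶜ ≤
      ∫⁻ x in ball (0 : EuclideanSpace ℝ (Fin n)) 1, C * ENNReal.ofReal ((1 - ‖x‖) ^ (-s)) := by
    refine setLIntegral_mono (by fun_prop) ?_
    intro x hx
    have hd : 0 < 1 - ‖x‖ := by simpa using hx
    calc ∫⁻ y in (ball (0 : EuclideanSpace ℝ (Fin n)) 1)ᶜ,
          ENNReal.ofReal (1 / ‖x - y‖ ^ ((n : ℝ) + s))
        ≤ ∫⁻ y in (ball (0 : EuclideanSpace ℝ (Fin n)) 1)ᶜ, ENNReal.ofReal (2 ^ ((n : ℝ) + s)) *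
            ENNReal.ofReal (((1 - ‖x‖) + ‖x - y‖) ^ (-((n : ℝ) + s))) := by
          refine setLIntegral_mono (by fun_prop) ?_
          intro y hy
          have hy1 : 1 ≤ ‖y‖ := by simpa using hy
          have hxy : 1 - ‖x‖ ≤ ‖x - y‖ := by
            have := norm_sub_norm_le y x
            rw [norm_sub_rev] at this
            linarith
          rw [← ENNReal.ofReal_mul (by positivity)]
          apply ENNReal.ofReal_le_ofReal
          have hpos : 0 < ‖x - y‖ := by linarith
          have hns : 0 ≤ (n : ℝ) + s := by have := hs.1; positivity
          rw [Real.rpow_neg (by positivity), ← div_eq_mul_inv, ← Real.div_rpow (by norm_num)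
            (by positivity), one_div, ← Real.inv_rpow hpos.le]
          apply Real.rpow_le_rpow (by positivity) _ hns
          rw [inv_eq_one_div, div_le_div_iff₀ hpos (by positivity)]
          linarith
      _ ≤ ∫⁻ y : EuclideanSpace ℝ (Fin n), ENNReal.ofReal (2 ^ ((n : ℝ) + s)) *
            ENNReal.ofReal (((1 - ‖x‖) + ‖x - y‖) ^ (-((n : ℝ) + s))) := setLIntegral_le_lintegral _ _
      _ = C * ENNReal.ofReal ((1 - ‖x‖) ^ (-s)) := by
          rw [lintegral_const_mul _ (by fun_prop), inner_scale n s hs.1 _ hd, hC]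
          ring
  refine hle.trans_lt ?_
  rw [lintegral_const_mul _ (by fun_prop)]
  exact ENNReal.mul_lt_top hCfin.lt_top (ball_int n hn s hs)

lemma nuM_swap (n : ℕ) (s : ℝ) (A B : Set (EuclideanSpace ℝ (Fin n)))
    (hA : MeasurableSet A) (hB : MeasurableSet B) :
    nuM n s (B ×ˢ A) = nuM n s (A ×ˢ B) := by
  rw [nuM, withDensity_apply _ (hA.prod hB), withDensity_apply _ (hB.prod hA),
    ← Measure.prod_restrict, ← Measure.prod_restrict, ← lintegral_prod_swap]
  apply lintegral_congr
  intro p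
  simp [kerK, norm_sub_rev]

/-- The pairs straddling the boundary of the ball. -/
def TT (n : ℕ) (D : Set (EuclideanSpace ℝ (Fin n))) :
    Set (EuclideanSpace ℝ (Fin n) × EuclideanSpace ℝ (Fin n)) :=
  (ball 0 1 ×ˢ (D \ ball 0 1)) ∪ ((D \ ball 0 1) ×ˢ ball 0 1)

lemma measurable_TT (n : ℕ) (D : Set (EuclideanSpace ℝ (Fin n))) (hD : MeasurableSet D) :
    MeasurableSet (TT n D) :=
  (measurableSet_ball.prod (hD.diff measurableSet_ball)).union
    ((hD.diff measurableSet_ball).prod measurableSet_ball)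

lemma TT_finite (n : ℕ) (hn : 1 ≤ n) (s : ℝ) (hs : s ∈ Set.Ioo (0:ℝ) 1) :
    nuM n s (TT n univ) ≠ ⊤ := by
  have h := L_finite n hn s hs
  rw [interactionL_eq _ _ _ _ measurableSet_ball measurableSet_ball.compl] at h
  refine ((measure_union_le _ _).trans_lt ?_).ne
  rw [← compl_eq_univ_sdiff, nuM_swap n s (ball 0 1) _ measurableSet_ball measurableSet_ball.compl]
  exact ENNReal.add_lt_top.2 ⟨h, h⟩

lemma ae_pair (n : ℕ) (s : ℝ) (P : EuclideanSpace ℝ (Fin n) → Prop) (h : ∀ᵐ x, P x) :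
    ∀ᵐ p ∂(nuM n s), P p.1 ∧ P p.2 := by
  apply (withDensity_absolutelyContinuous _ (kerK n s)).ae_le
  exact (Measure.quasiMeasurePreserving_fst.ae h).and (Measure.quasiMeasurePreserving_snd.ae h)

lemma lsc (n : ℕ) (s : ℝ) (A : ℕ → Set (EuclideanSpace ℝ (Fin n)))
    (E : Set (EuclideanSpace ℝ (Fin n))) (hA : ∀ m, MeasurableSet (A m)) (hE : MeasurableSet E)
    (hae : ∀ᵐ x, ∀ᶠ m in atTop, (x ∈ A m ↔ x ∈ E)) :
    Jfun n s (ball 0 1) E ≤ liminf (fun m => Jfun n s (ball 0 1) (A m)) atTop := by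
  simp_rw [Jfun_eq n s _ (hA _), Jfun_eq n s _ hE]
  simp_rw [← lintegral_indicator_one (measurable_SS n _ (hA _)),
    ← lintegral_indicator_one (measurable_SS n _ hE)]
  refine le_trans ?_ (lintegral_liminf_le fun m =>
    measurable_one.indicator (measurable_SS n _ (hA m)))
  apply lintegral_mono_ae
  filter_upwards [ae_pair n s _ hae] with p hp
  refine le_liminf_of_le (by isBoundedDefault) ?_
  filter_upwards [hp.1, hp.2] with m h1 h2
  have : p ∈ SS n (A m) ↔ p ∈ SS n E := by
    simp only [SS, mem_union, mem_prod, mem_inter_iff, Set.mem_sdiff, mem_compl_iff, h1, h2]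
  by_cases hpE : p ∈ SS n E
  · rw [indicator_of_mem hpE, indicator_of_mem (this.2 hpE)]
  · rw [indicator_of_notMem hpE]
    exact zero_le

lemma usc (n : ℕ) (hn : 1 ≤ n) (s : ℝ) (hs : s ∈ Set.Ioo (0:ℝ) 1)
    (A : ℕ → Set (EuclideanSpace ℝ (Fin n)))
    (E F : Set (EuclideanSpace ℝ (Fin n))) (hA : ∀ m, IsMinimizerB1 n s (A m))
    (hE : MeasurableSet E) (hF : MeasurableSet F) (hFE : F \ ball 0 1 = E \ ball 0 1)
    (hae : ∀ᵐ x, ∀ᶠ m in atTop, (x ∈ A m ↔ x ∈ E)) :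
    limsup (fun m => Jfun n s (ball 0 1) (A m)) atTop ≤ Jfun n s (ball 0 1) F := by
  have hD : ∀ m, MeasurableSet (symmDiff (A m) E) := fun m => (hA m).1.symmDiff hE
  have hb : Tendsto (fun m => nuM n s (TT n (symmDiff (A m) E))) atTop (nhds 0) := by
    have := tendsto_measure_of_ae_tendsto_indicator (μ := nuM n s) atTop MeasurableSet.empty
      (fun m => measurable_TT n _ (hD m)) (measurable_TT n univ MeasurableSet.univ)
      (TT_finite n hn s hs)
      (Eventually.of_forall fun m => by
        intro p hp
        simp only [TT, mem_union, mem_prod, Set.mem_sdiff, mem_univ] at hp ⊢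
        tauto)
      (by
        filter_upwards [ae_pair n s _ hae] with p hp
        filter_upwards [hp.1, hp.2] with m h1 h2
        simp only [TT, mem_union, mem_prod, Set.mem_sdiff, mem_symmDiff, h1, h2, mem_empty_iff_false]
        tauto)
    simpa using this
  have hle : ∀ m, Jfun n s (ball 0 1) (A m) ≤
      Jfun n s (ball 0 1) F + nuM n s (TT n (symmDiff (A m) E)) := by
    intro m
    have hG : MeasurableSet ((F ∩ ball 0 1) ∪ (A m \ ball 0 1)) :=
      (hF.inter measurableSet_ball).union ((hA m).1.diff measurableSet_ball)
    refine ((hA m).2 _ hG ?_).trans ?_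
    · ext x
      simp only [Set.mem_sdiff, mem_union, mem_inter_iff]
      tauto
    · rw [Jfun_eq n s _ hG, Jfun_eq n s _ hF]
      refine (measure_mono ?_).trans (measure_union_le _ _)
      rintro ⟨x, y⟩ hp
      have hx := Set.ext_iff.1 hFE x
      have hy := Set.ext_iff.1 hFE y
      simp only [SS, TT, mem_union, mem_prod, mem_inter_iff, Set.mem_sdiff, mem_compl_iff,
        mem_symmDiff] at hp hx hy ⊢
      by_cases hbx : x ∈ ball (0 : EuclideanSpace ℝ (Fin n)) 1 <;>
        by_cases hby : y ∈ ball (0 : EuclideanSpace ℝ (Fin n)) 1 <;>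
        simp only [hbx, hby, and_true, and_false, not_true_eq_false, not_false_eq_true, or_false,
          false_or, false_and, true_and] at hp hx hy ⊢ <;> tauto
  calc limsup (fun m => Jfun n s (ball 0 1) (A m)) atTop
      ≤ limsup (fun m => Jfun n s (ball 0 1) F + nuM n s (TT n (symmDiff (A m) E))) atTop :=
        limsup_le_limsup (Eventually.of_forall hle)
    _ = Jfun n s (ball 0 1) F := by
        have := (tendsto_const_nhds (x := Jfun n s (ball 0 1) F)).add hb
        rw [add_zero] at this
        exact this.limsup_eq

lemma subseq (n : ℕ) (Ek : ℕ → Set (EuclideanSpace ℝ (Fin n))) (E : Set (EuclideanSpace ℝ (Fin n)))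
    (hE : MeasurableSet E) (hEk : ∀ k, MeasurableSet (Ek k))
    (hconv : L1locIndicatorTendsto n Ek E) (ns : ℕ → ℕ) (hns : Tendsto ns atTop atTop) :
    ∃ ms : ℕ → ℕ, ∀ᵐ x, ∀ᶠ m in atTop, (x ∈ Ek (ns (ms m)) ↔ x ∈ E) := by
  have key : ∀ m : ℕ, ∃ k, volume (symmDiff (Ek (ns k)) E ∩ closedBall 0 (m : ℝ)) ≤
      ENNReal.ofReal ((1 / 2) ^ m) := by
    intro m
    have h := (hconv (closedBall 0 (m : ℝ)) (isCompact_closedBall _ _)).comp hns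
    have hpos : (0 : ℝ) < (1 / 2) ^ m := by positivity
    obtain ⟨k, hk⟩ := (h.eventually (gt_mem_nhds hpos)).exists
    refine ⟨k, ?_⟩
    have hD : MeasurableSet (symmDiff (Ek (ns k)) E) := (hEk _).symmDiff hE
    have heq : (fun x => |indicator (Ek (ns k)) (fun _ => (1:ℝ)) x
        - indicator E (fun _ => (1:ℝ)) x|) = indicator (symmDiff (Ek (ns k)) E) 1 := by
      ext x
      by_cases h1 : x ∈ Ek (ns k) <;> by_cases h2 : x ∈ E <;> simp [indicator, mem_symmDiff, h1, h2]
    simp only [Function.comp_apply] at hk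
    rw [heq, integral_indicator_one hD] at hk
    rw [measureReal_def, Measure.restrict_apply hD] at hk
    have hfin : volume (symmDiff (Ek (ns k)) E ∩ closedBall 0 (m : ℝ)) ≠ ⊤ :=
      ((measure_mono inter_subset_right).trans_lt measure_closedBall_lt_top).ne
    rw [← ENNReal.ofReal_toReal hfin]
    exact ENNReal.ofReal_le_ofReal hk.le
  choose ms hms using key
  refine ⟨ms, ?_⟩
  have hsum : ∑' m, volume (symmDiff (Ek (ns (ms m))) E ∩ closedBall 0 (m : ℝ)) ≠ ⊤ := by
    refine ((ENNReal.tsum_le_tsum hms).trans_lt ?_).ne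
    rw [← ENNReal.ofReal_tsum_of_nonneg (fun m => by positivity) summable_geometric_two]
    exact ENNReal.ofReal_lt_top
  filter_upwards [ae_eventually_notMem hsum] with x hx
  obtain ⟨N, hN⟩ := exists_nat_ge ‖x‖
  filter_upwards [hx, eventually_ge_atTop N] with m hm hmN
  have hxm : x ∈ closedBall (0 : EuclideanSpace ℝ (Fin n)) (m : ℝ) := by
    rw [mem_closedBall_zero_iff]
    exact hN.trans (by exact_mod_cast hmN)
  simp only [mem_inter_iff, hxm, mem_symmDiff] at hm
  tauto

/-- Compactness of minimizers: an `L¹_loc` limit of minimizers of `J_{B₁}` is a minimizer,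
and the energies converge. -/
theorem minimizers_compactness (n : ℕ) (hn : 1 ≤ n) (s : ℝ) (hs : s ∈ Set.Ioo (0:ℝ) 1)
    (Ek : ℕ → Set (EuclideanSpace ℝ (Fin n))) (E : Set (EuclideanSpace ℝ (Fin n)))
    (hE : MeasurableSet E)
    (hmin : ∀ k, IsMinimizerB1 n s (Ek k))
    (hconv : L1locIndicatorTendsto n Ek E) :
    IsMinimizerB1 n s E ∧
      Tendsto (fun k => Jfun n s (ball (0 : EuclideanSpace ℝ (Fin n)) 1) (Ek k)) atTop
        (nhds (Jfun n s (ball (0 : EuclideanSpace ℝ (Fin n)) 1) E)) := by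
  constructor
  · refine ⟨hE, fun F hF hFE => ?_⟩
    obtain ⟨ms, hms⟩ := subseq n Ek E hE (fun k => (hmin k).1) hconv id tendsto_id
    exact (lsc n s _ E (fun m => (hmin _).1) hE hms).trans ((liminf_le_limsup).trans
      (usc n hn s hs _ E F (fun m => hmin _) hE hF hFE hms))
  · apply tendsto_of_subseq_tendsto
    intro ns hns
    obtain ⟨ms, hms⟩ := subseq n Ek E hE (fun k => (hmin k).1) hconv ns hns
    exact ⟨ms, tendsto_of_le_liminf_of_limsup_le
      (lsc n s _ E (fun m => (hmin _).1) hE hms)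
      (usc n hn s hs _ E E (fun m => hmin _) hE hE rfl hms)⟩
end
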